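/- Let q = 2^m. Every Euclidean self-orthogonal linear code over F_q of even length n is contained in a Euclidean self-dual code of length n (dimension n/2). -/

import Mathlib

open LinearMap (BilinForm)
open Module (finrank)

section DotProduct

variable {F ι : Type*} [Field F] [Fintype ι]

theorem nondegenerate_dotProductBilin :
    BilinForm.Nondegenerate (dotProductBilin F F : BilinForm F (ι → F)) := by
  refine ⟨fun x hx => ?_, fun y hy => ?_⟩
  · exact dotProduct_eq_zero x hx
  · exact dotProduct_eq_zero y fun w => (dotProduct_comm y w).trans (hy w)

theorem finrank_add_finrank_orthogonal_dotProductBilin (D : Submodule F (ι → F)) :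
    finrank F D + finrank F (BilinForm.orthogonal (dotProductBilin F F) D) = Fintype.card ι := by
  have h := BilinForm.finrank_orthogonal nondegenerate_dotProductBilin D
  have hD := D.finrank_le
  rw [Module.finrank_fintype_fun_eq_card] at h hD
  omega

/-- In characteristic two, `x ⬝ᵥ x` is the square of `1 ⬝ᵥ x`. -/
theorem dotProduct_self_eq_zero_of_one_dotProduct_eq_zero [CharP F 2] {x : ι → F}
    (hx : (1 : ι → F) ⬝ᵥ x = 0) : x ⬝ᵥ x = 0 := by
  rw [one_dotProduct] at hx
  rw [dotProduct, ← CharTwo.sum_mul_self, hx, mul_zero]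

theorem sup_span_singleton_le_orthogonal {D : Submodule F (ι → F)} {x : ι → F}
    (hD : D ≤ BilinForm.orthogonal (dotProductBilin F F) D)
    (hx : x ∈ BilinForm.orthogonal (dotProductBilin F F) D) (hxx : x ⬝ᵥ x = 0) :
    D ⊔ F ∙ x ≤ BilinForm.orthogonal (dotProductBilin F F) (D ⊔ F ∙ x) := by
  intro u hu v hv
  obtain ⟨d, hd, _, hax, rfl⟩ := Submodule.mem_sup.mp hu
  obtain ⟨e, he, _, hbx, rfl⟩ := Submodule.mem_sup.mp hv
  obtain ⟨a, rfl⟩ := Submodule.mem_span_singleton.mp hax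
  obtain ⟨b, rfl⟩ := Submodule.mem_span_singleton.mp hbx
  have hed : e ⬝ᵥ d = 0 := hD hd e he
  have hex : e ⬝ᵥ x = 0 := hx e he
  have hxd : x ⬝ᵥ d = 0 := (dotProduct_comm x d).trans (hx d hd)
  change (e + b • x) ⬝ᵥ (d + a • x) = 0
  simp [hed, hex, hxd, hxx]

/-- A self-orthogonal code of dimension `k` and length at least `2 * k + 2` over a field of
characteristic two extends to a strictly larger self-orthogonal code. -/
theorem exists_lt_self_orthogonal [CharP F 2] {D : Submodule F (ι → F)}
    (hD : D ≤ BilinForm.orthogonal (dotProductBilin F F) D)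
    (hcard : 2 * finrank F D + 2 ≤ Fintype.card ι) :
    ∃ E, D < E ∧ E ≤ BilinForm.orthogonal (dotProductBilin F F) E := by
  have hsup : finrank F (D ⊔ F ∙ (1 : ι → F) : Submodule F (ι → F)) ≤ finrank F D + 1 :=
    (Submodule.finrank_add_le_finrank_add_finrank _ _).trans
      (Nat.add_le_add_left ((finrank_span_le_card _).trans (by simp)) _)
  have hadd := finrank_add_finrank_orthogonal_dotProductBilin (D ⊔ F ∙ (1 : ι → F))
  obtain ⟨x, hx, hxD⟩ : ∃ x ∈ BilinForm.orthogonal (dotProductBilin F F) (D ⊔ F ∙ (1 : ι → F)),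
      x ∉ D := by
    by_contra! h
    have := Submodule.finrank_mono (R := F) h
    omega
  have hx1 : (1 : ι → F) ⬝ᵥ x = 0 :=
    hx 1 (Submodule.mem_sup_right (Submodule.mem_span_singleton_self _))
  refine ⟨D ⊔ F ∙ x, ?_, sup_span_singleton_le_orthogonal hD
    (fun c hc => hx c (Submodule.mem_sup_left hc))
    (dotProduct_self_eq_zero_of_one_dotProduct_eq_zero hx1)⟩
  exact left_lt_sup.mpr fun h => hxD (h (Submodule.mem_span_singleton_self x))

/-- Over a field of characteristic two, every self-orthogonal code of even length is contained in
a self-dual code. -/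
theorem exists_self_dual_ge [CharP F 2] (hι : Even (Fintype.card ι)) {C : Submodule F (ι → F)}
    (hC : C ≤ BilinForm.orthogonal (dotProductBilin F F) C) :
    ∃ D, C ≤ D ∧ BilinForm.orthogonal (dotProductBilin F F) D = D := by
  obtain ⟨D, hCD, hD⟩ := exists_maximal_ge_of_wellFoundedGT
    (fun D : Submodule F (ι → F) => D ≤ BilinForm.orthogonal (dotProductBilin F F) D) C hC
  refine ⟨D, hCD, (Submodule.eq_of_le_of_finrank_le hD.prop ?_).symm⟩
  have hadd := finrank_add_finrank_orthogonal_dotProductBilin D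
  by_contra! hlt
  obtain ⟨r, hr⟩ := hι
  obtain ⟨E, hDE, hE⟩ := exists_lt_self_orthogonal hD.prop (by omega)
  exact hD.not_prop_of_gt hDE hE

end DotProduct

/-- over F_q with q = 2^m, every Euclidean self-orthogonal code of even
length n is contained in a Euclidean self-dual code of dimension n/2. -/
theorem stmt10 (m : ℕ) (hm : 0 < m)
    (F : Type) [Field F] [Fintype F] (hF : Fintype.card F = 2 ^ m)
    (n : ℕ) (hn : Even n)
    (C : Submodule F (Fin n → F))
    (hso : ∀ x ∈ C, ∀ y ∈ C, ∑ i, x i * y i = 0) :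
    ∃ D : Submodule F (Fin n → F), C ≤ D ∧ Module.finrank F D = n / 2 ∧
      (∀ x ∈ D, ∀ y ∈ D, ∑ i, x i * y i = 0) ∧
      (∀ x : Fin n → F, (∀ c ∈ D, ∑ i, x i * c i = 0) → x ∈ D) := by
  have : Fact (Nat.Prime 2) := ⟨Nat.prime_two⟩
  have : CharP F 2 := charP_of_card_eq_prime_pow hF
  obtain ⟨D, hCD, hD⟩ := exists_self_dual_ge (by simpa using hn) (fun x hx y hy => hso y hy x hx)
  have hadd := finrank_add_finrank_orthogonal_dotProductBilin D
  rw [hD, Fintype.card_fin] at hadd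
  refine ⟨D, hCD, by omega, fun x hx y hy => hD.ge hy x hx, fun x hx => hD.le fun c hc => ?_⟩
  exact (dotProduct_comm c x).trans (hx c hc)
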